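/- (Region-wise policy improvement) Let r : 𝒳 × 𝒰 → ℝ be bounded and let π and π′ be policies such that for every x ∈ X^π: F^π(f(x, π′(x))) = 0, and r(x, π′(x)) + γ·V^π(f(x, π′(x))) ≥ r(x, u) + γ·V^π(f(x, u)) for every u ∈ 𝒰 with F^π(f(x, u)) = 0. Then V^{π′}(x) ≥ V^π(x) for every x ∈ X^π. -/

import Mathlib

/-! The proof is the classical policy-improvement argument, restricted to the feasible region of `π`.
That region is invariant under `π` and, since `F^π` vanishes exactly on it, also under `π'`.
Taking `u = π x` in the greedy condition and unrolling one step of each value function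
(`Vval_step`) gives `V^π(x) - V^{π'}(x) ≤ γ (V^π(x') - V^{π'}(x'))` with `x' = f x (π' x)` again
feasible. Both value functions are bounded (`abs_Vval_le`), so iterating `n` times bounds the gap
by `γ ^ n` times a constant, and letting `n → ∞` shows that it is nonpositive. -/

open scoped Classical

variable {X U : Type*}

/-- Trajectory from `x` under policy `π`: `x₀ = x`, `x_{t+1} = f xₜ (π xₜ)`. -/
def traj (f : X → U → X) (π : X → U) (x : X) : ℕ → X
  | 0 => x
  | t + 1 => f (traj f π x t) (π (traj f π x t))

/-- Constraint indicator: `c(x) = 1` if `h x > 0`, else `0`. -/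
noncomputable def cInd (h : X → ℝ) (x : X) : ℝ := if h x > 0 then 1 else 0

/-- Constraint decay function `F^π(x) = γ ^ (N^π x)` with `γ ^ ∞ := 0`,
where `N^π x` is the least `t` with `h (xₜ) > 0` along the trajectory. -/
noncomputable def Fcdf (f : X → U → X) (h : X → ℝ) (γ : ℝ) (π : X → U) (x : X) : ℝ :=
  if hx : ∃ t, h (traj f π x t) > 0 then γ ^ Nat.find hx else 0

/-- Feasible region of a policy `π`. -/
def Xfeas (f : X → U → X) (h : X → ℝ) (π : X → U) : Set X :=
  {x | ∀ t, h (traj f π x t) ≤ 0}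

/-- Maximum feasible region. -/
def Xstar (f : X → U → X) (h : X → ℝ) : Set X :=
  {x | ∃ π : X → U, x ∈ Xfeas f h π}

/-- Optimal constraint decay function: infimum of `F^π` over all policies. -/
noncomputable def Fstar (f : X → U → X) (h : X → ℝ) (γ : ℝ) (x : X) : ℝ :=
  ⨅ π : X → U, Fcdf f h γ π x

/-- State-value function of a policy. -/
noncomputable def Vval (f : X → U → X) (r : X → U → ℝ) (γ : ℝ) (π : X → U) (x : X) : ℝ :=
  ∑' t : ℕ, γ ^ t * r (traj f π x t) (π (traj f π x t))

/-- Optimal state-value function: max of `V^π` over policies whose feasible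
region equals the maximum feasible region. -/
noncomputable def Vstar (f : X → U → X) (h : X → ℝ) (r : X → U → ℝ) (γ : ℝ) (x : X) : ℝ :=
  ⨆ π : {π : X → U // Xfeas f h π = Xstar f h}, Vval f r γ π.1 x

/-- The trajectory after one step is the trajectory from the successor state. -/
theorem traj_shift (f : X → U → X) (π : X → U) (x : X) (t : ℕ) :
    traj f π x (t + 1) = traj f π (f x (π x)) t := by
  induction t with
  | zero => rfl
  | succ t ih => rw [traj, ih, traj]

theorem Fcdf_eq_zero_iff (f : X → U → X) (h : X → ℝ) {γ : ℝ} (hγ0 : 0 < γ) (π : X → U) (x : X) :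
    Fcdf f h γ π x = 0 ↔ x ∈ Xfeas f h π := by
  unfold Fcdf
  split_ifs with hx
  · simp only [(pow_pos hγ0 _).ne', false_iff]
    obtain ⟨t, ht⟩ := hx
    exact fun hmem => absurd (hmem t) (not_le.mpr ht)
  · simpa [Xfeas] using hx

theorem step_mem_Xfeas {f : X → U → X} {h : X → ℝ} {π : X → U} {x : X} (hx : x ∈ Xfeas f h π) :
    f x (π x) ∈ Xfeas f h π :=
  fun t => traj_shift f π x t ▸ hx (t + 1)

theorem abs_term_le {r : X → U → ℝ} {γ M : ℝ} (hγ0 : 0 < γ) (hM : ∀ x u, |r x u| ≤ M)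
    (f : X → U → X) (π : X → U) (x : X) (t : ℕ) :
    ‖γ ^ t * r (traj f π x t) (π (traj f π x t))‖ ≤ γ ^ t * M := by
  rw [Real.norm_eq_abs, abs_mul, abs_of_pos (pow_pos hγ0 t)]
  exact mul_le_mul_of_nonneg_left (hM _ _) (pow_pos hγ0 t).le

theorem abs_Vval_le {r : X → U → ℝ} {γ M : ℝ} (hγ0 : 0 < γ) (hγ1 : γ < 1)
    (hM : ∀ x u, |r x u| ≤ M) (f : X → U → X) (π : X → U) (x : X) :
    |Vval f r γ π x| ≤ (1 - γ)⁻¹ * M :=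
  tsum_of_norm_bounded ((hasSum_geometric_of_lt_one hγ0.le hγ1).mul_right M)
    (abs_term_le hγ0 hM f π x)

/-- Bellman's equation for the value of a fixed policy. -/
theorem Vval_step {r : X → U → ℝ} {γ M : ℝ} (hγ0 : 0 < γ) (hγ1 : γ < 1)
    (hM : ∀ x u, |r x u| ≤ M) (f : X → U → X) (π : X → U) (x : X) :
    Vval f r γ π x = r x (π x) + γ * Vval f r γ π (f x (π x)) := by
  have hs : Summable fun t : ℕ => γ ^ t * r (traj f π x t) (π (traj f π x t)) :=
    .of_norm_bounded ((summable_geometric_of_lt_one hγ0.le hγ1).mul_right M)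
      (abs_term_le hγ0 hM f π x)
  unfold Vval
  rw [hs.tsum_eq_zero_add, ← tsum_mul_left]
  simp only [traj_shift, pow_succ', mul_assoc]
  simp [traj]

/-- Region-wise policy improvement: inside the feasible region of
`π`, the improved policy `π'` has a state-value no lower than that of `π`. -/
theorem region_wise_policy_improvement (f : X → U → X) (h : X → ℝ)
    (r : X → U → ℝ) (γ : ℝ) (hγ0 : 0 < γ) (hγ1 : γ < 1)
    (hr : ∃ M : ℝ, ∀ (x : X) (u : U), |r x u| ≤ M) (π π' : X → U)
    (h1 : ∀ x ∈ Xfeas f h π, Fcdf f h γ π (f x (π' x)) = 0)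
    (h2 : ∀ x ∈ Xfeas f h π, ∀ u : U, Fcdf f h γ π (f x u) = 0 →
      r x u + γ * Vval f r γ π (f x u) ≤
        r x (π' x) + γ * Vval f r γ π (f x (π' x))) :
    ∀ x ∈ Xfeas f h π, Vval f r γ π x ≤ Vval f r γ π' x := by
  obtain ⟨M, hM⟩ := hr
  have gap_le : ∀ n : ℕ, ∀ x ∈ Xfeas f h π,
      Vval f r γ π x - Vval f r γ π' x ≤ γ ^ n * (2 * ((1 - γ)⁻¹ * M)) := by
    intro n
    induction n with
    | zero =>
      intro x _
      have hV := (abs_le.mp (abs_Vval_le hγ0 hγ1 hM f π x)).2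
      have hV' := (abs_le.mp (abs_Vval_le hγ0 hγ1 hM f π' x)).1
      linarith
    | succ n ih =>
      intro x hx
      have hgreedy := h2 x hx (π x) ((Fcdf_eq_zero_iff f h hγ0 π _).mpr (step_mem_Xfeas hx))
      have hnext := mul_le_mul_of_nonneg_left
        (ih _ ((Fcdf_eq_zero_iff f h hγ0 π _).mp (h1 x hx))) hγ0.le
      rw [Vval_step hγ0 hγ1 hM f π x, Vval_step hγ0 hγ1 hM f π' x, pow_succ']
      linarith
  intro x hx
  have hlim := (tendsto_pow_atTop_nhds_zero_of_lt_one hγ0.le hγ1).mul_const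
    (2 * ((1 - γ)⁻¹ * M))
  rw [zero_mul] at hlim
  exact sub_nonpos.mp (ge_of_tendsto' hlim fun n => gap_le n x hx)
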